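/- Let ρ and σ be n×n positive definite complex density matrices. If F_{t₀}^spec(ρ,σ) = 1 for some t₀ ∈ (0,1), then ρ = σ; conversely, if ρ = σ then F_t^spec(ρ,σ) = 1 for all t ∈ [0,1]. -/

import Mathlib

/-!
Write `G = ρ⁻¹ ♯ σ`. Then `G` is positive definite and solves the Riccati equation `G ρ G = σ`
(`msharp_riccati`). In an eigenbasis of `G` with eigenvalues `d i`, let `p i > 0` be the diagonal
entries of `ρ`; then `Tr (ρ G ^ r) = ∑ i, p i * d i ^ r` for every real `r` (`trace_mul_mpow`).
Taking `r = 0` and `r = 2` gives `∑ i, p i = Tr ρ = 1` and `∑ i, p i * d i ^ 2 = Tr σ = 1`, so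
`F_t^spec (ρ, σ) = ∑ i, p i * (d i ^ 2) ^ t` is the mean of a strictly concave function of a random
variable of mean `1`. If it equals `1`, then the equality case of Bernoulli's inequality
(`eq_one_of_sum_rpow`) forces every `d i` to be `1`, whence `G = 1` and `σ = ρ`.
Conversely `ρ⁻¹ ♯ ρ = 1` by uniqueness of the positive square root (`msharp_inv_self`).
-/

open Matrix
open scoped ComplexOrder

/-- Real power of a matrix by functional calculus on the eigenvalues
(junk value `0` if the matrix is not Hermitian).  Since eigenvalue powers
are real powers (`Real.rpow`) of real numbers, the conventions `0 ^ 0 = 1`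
and `0 ^ s = 0` for `s > 0` hold on positive semidefinite matrices. -/
noncomputable def mpow {n : Type*} [Fintype n] [DecidableEq n]
    (A : Matrix n n ℂ) (r : ℝ) : Matrix n n ℂ :=
  if hA : A.IsHermitian then
    (hA.eigenvectorUnitary : Matrix n n ℂ) *
      Matrix.diagonal (fun i => ((hA.eigenvalues i ^ r : ℝ) : ℂ)) *
      (star (hA.eigenvectorUnitary : Matrix n n ℂ))
  else 0

/-- The matrix geometric mean `A ♯ B = A^{1/2} (A^{-1/2} B A^{-1/2})^{1/2} A^{1/2}`. -/
noncomputable def msharp {n : Type*} [Fintype n] [DecidableEq n]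
    (A B : Matrix n n ℂ) : Matrix n n ℂ :=
  mpow A (1/2) * mpow (mpow A (-(1/2)) * B * mpow A (-(1/2))) (1/2) * mpow A (1/2)

/-- The weighted spectral fidelity `F_t^spec(ρ,σ) = Tr(ρ (ρ⁻¹ ♯ σ)^{2t})`. -/
noncomputable def specFid {n : Type*} [Fintype n] [DecidableEq n]
    (t : ℝ) (ρ σ : Matrix n n ℂ) : ℂ :=
  Matrix.trace (ρ * mpow (msharp ρ⁻¹ σ) (2 * t))

section

open scoped MatrixOrder

variable {n : Type*} [Fintype n] [DecidableEq n]

/-- On positive semidefinite matrices `mpow` is the power of the continuous functional calculus,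
which makes Mathlib's laws of exponents available. -/
lemma mpow_eq_rpow {A : Matrix n n ℂ} (hA : A.PosSemidef) (r : ℝ) : mpow A r = A ^ r := by
  rw [CFC.rpow_eq_cfc_real hA.nonneg, hA.1.cfc_eq, Matrix.IsHermitian.cfc,
    Unitary.conjStarAlgAut_apply, mpow, dif_pos hA.1]
  rfl

lemma mpow_add {A : Matrix n n ℂ} (hA : A.PosDef) (r s : ℝ) :
    mpow A r * mpow A s = mpow A (r + s) := by
  simp only [mpow_eq_rpow hA.posSemidef]
  exact (CFC.rpow_add hA.isUnit).symm

lemma mpow_zero {A : Matrix n n ℂ} (hA : A.PosDef) : mpow A 0 = 1 := by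
  rw [mpow_eq_rpow hA.posSemidef]
  exact CFC.rpow_zero A hA.posSemidef.nonneg

lemma mpow_one {A : Matrix n n ℂ} (hA : A.PosDef) : mpow A 1 = A := by
  rw [mpow_eq_rpow hA.posSemidef]
  exact CFC.rpow_one A hA.posSemidef.nonneg

lemma one_mpow (r : ℝ) : mpow (1 : Matrix n n ℂ) r = 1 := by
  rw [mpow_eq_rpow Matrix.PosDef.one.posSemidef]
  exact CFC.one_rpow

lemma mpow_mul_mpow_neg {A : Matrix n n ℂ} (hA : A.PosDef) (r : ℝ) :
    mpow A r * mpow A (-r) = 1 := by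
  rw [mpow_add hA, add_neg_cancel, mpow_zero hA]

lemma mpow_neg_mul_mpow {A : Matrix n n ℂ} (hA : A.PosDef) (r : ℝ) :
    mpow A (-r) * mpow A r = 1 := by
  rw [mpow_add hA, neg_add_cancel, mpow_zero hA]

lemma posDef_mpow {A : Matrix n n ℂ} (hA : A.PosDef) (r : ℝ) : (mpow A r).PosDef := by
  have h : (mpow A r).PosSemidef := by
    rw [mpow_eq_rpow hA.posSemidef]
    exact CFC.rpow_nonneg.posSemidef
  exact h.posDef_iff_isUnit.2 (IsUnit.of_mul_eq_one _ (mpow_mul_mpow_neg hA r))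

lemma mpow_half_mul_self {A : Matrix n n ℂ} (hA : A.PosDef) :
    mpow A (1/2) * mpow A (1/2) = A := by
  rw [mpow_add hA, add_halves, mpow_one hA]

/-- The positive square root is unique. -/
lemma mpow_half_of_mul_self {X : Matrix n n ℂ} (hX : X.PosDef) :
    mpow (X * X) (1/2) = X := by
  have hXX : (X * X).PosSemidef := by
    simpa [pow_two] using hX.posSemidef.pow 2
  rw [mpow_eq_rpow hXX, ← CFC.sqrt_eq_rpow]
  exact CFC.sqrt_mul_self X hX.posSemidef.nonneg

lemma posDef_conj {A C : Matrix n n ℂ} (hA : A.PosDef) (hC : C.PosDef) :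
    (C * A * C).PosDef := by
  have h := hA.conjTranspose_mul_mul_same (B := C) (Matrix.mulVec_injective_of_isUnit hC.isUnit)
  rwa [hC.1.eq] at h

lemma posDef_msharp {A B : Matrix n n ℂ} (hA : A.PosDef) (hB : B.PosDef) :
    (msharp A B).PosDef :=
  posDef_conj (posDef_mpow (posDef_conj hB (posDef_mpow hA _)) _) (posDef_mpow hA _)

lemma inv_eq_mpow {A : Matrix n n ℂ} (hA : A.PosDef) :
    A⁻¹ = mpow A (-(1/2)) * mpow A (-(1/2)) := by
  have h := mpow_neg_mul_mpow hA 1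
  rw [mpow_one hA] at h
  rw [mpow_add hA, Matrix.inv_eq_left_inv h]
  norm_num

/-- The geometric mean `G = A ♯ B` solves the Riccati equation `G A⁻¹ G = B`. -/
lemma msharp_riccati {A B : Matrix n n ℂ} (hA : A.PosDef) (hB : B.PosDef) :
    msharp A B * A⁻¹ * msharp A B = B := by
  have hab := mpow_mul_mpow_neg hA (1/2)
  have hba := mpow_neg_mul_mpow hA (1/2)
  have hm := mpow_half_mul_self (posDef_conj hB (posDef_mpow hA (-(1/2))))
  rw [inv_eq_mpow hA, msharp]
  generalize mpow (mpow A (-(1/2)) * B * mpow A (-(1/2))) (1/2) = m at *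
  generalize mpow A (1/2) = a at *
  generalize mpow A (-(1/2)) = b at *
  calc a * m * a * (b * b) * (a * m * a)
      = a * m * (a * b) * (b * a) * m * a := by noncomm_ring
    _ = a * (m * m) * a := by rw [hab, hba]; noncomm_ring
    _ = (a * b) * B * (b * a) := by rw [hm]; noncomm_ring
    _ = B := by rw [hab, hba, one_mul, mul_one]

lemma msharp_inv_self {A : Matrix n n ℂ} (hA : A.PosDef) : msharp A A⁻¹ = 1 := by
  have hab := mpow_mul_mpow_neg hA (1/2)
  have hba := mpow_neg_mul_mpow hA (1/2)
  have hbb : (mpow A (-(1/2)) * mpow A (-(1/2))).PosDef := by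
    rw [mpow_add hA]; exact posDef_mpow hA _
  have hm := mpow_half_of_mul_self hbb
  rw [msharp, inv_eq_mpow hA]
  generalize mpow A (1/2) = a at *
  generalize mpow A (-(1/2)) = b at *
  have e : b * (b * b) * b = (b * b) * (b * b) := by noncomm_ring
  rw [e, hm, ← mul_assoc, hab, one_mul, hba]

end

/-- Diagonalizing `G` turns `Tr (ρ G ^ r)` into a sum of powers of eigenvalues whose positive
weights do not depend on `r`. -/
lemma trace_mul_mpow {n : Type*} [Fintype n] [DecidableEq n] {ρ G : Matrix n n ℂ}
    (hρ : ρ.PosDef) (hG : G.IsHermitian) :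
    ∃ p : n → ℝ, (∀ i, 0 < p i) ∧
      ∀ r : ℝ, Matrix.trace (ρ * mpow G r) = ((∑ i, p i * hG.eigenvalues i ^ r : ℝ) : ℂ) := by
  set U : Matrix n n ℂ := (hG.eigenvectorUnitary : Matrix n n ℂ) with hU
  have hUu : IsUnit U := (Unitary.toUnits hG.eigenvectorUnitary).isUnit
  have hP : (Uᴴ * ρ * U).PosDef :=
    hρ.conjTranspose_mul_mul_same (Matrix.mulVec_injective_of_isUnit hUu)
  have hpos : ∀ i, 0 < (Uᴴ * ρ * U) i i := fun i => hP.diag_pos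
  refine ⟨fun i => ((Uᴴ * ρ * U) i i).re, fun i => (Complex.pos_iff.1 (hpos i)).1, fun r => ?_⟩
  have e : Matrix.trace (ρ * mpow G r) = Matrix.trace
      (Uᴴ * ρ * U * Matrix.diagonal (fun i => ((hG.eigenvalues i ^ r : ℝ) : ℂ))) := by
    rw [mpow, dif_pos hG, ← hU, Matrix.star_eq_conjTranspose, ← mul_assoc, Matrix.trace_mul_comm]
    simp only [mul_assoc]
  rw [e, Matrix.trace, Complex.ofReal_sum]
  refine Finset.sum_congr rfl fun i _ => ?_
  have hre : (((Uᴴ * ρ * U) i i).re : ℂ) = (Uᴴ * ρ * U) i i :=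
    Complex.ext rfl (by simpa using (Complex.pos_iff.1 (hpos i)).2)
  rw [Matrix.diag_apply, Matrix.mul_diagonal, Complex.ofReal_mul, hre]

/-- The equality case of Jensen's inequality for the strictly concave `x ↦ x ^ t` at mean `1`,
in terms of `x i = d i ^ 2`. -/
lemma eq_one_of_sum_rpow {ι : Type*} [Fintype ι] {p d : ι → ℝ} {t : ℝ}
    (hp : ∀ i, 0 < p i) (hd : ∀ i, 0 < d i) (ht : t ∈ Set.Ioo (0 : ℝ) 1)
    (h0 : ∑ i, p i * d i ^ (0 : ℝ) = 1) (h2 : ∑ i, p i * d i ^ (2 : ℝ) = 1)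
    (h : ∑ i, p i * d i ^ (2 * t) = 1) (i : ι) : d i = 1 := by
  -- The gap between `x ^ t` and its tangent line at `x = 1`.
  let g : ι → ℝ := fun i => 1 + t * (d i ^ (2 : ℝ) - 1) - d i ^ (2 * t)
  have hpow : ∀ i, (1 + (d i ^ (2 : ℝ) - 1)) ^ t = d i ^ (2 * t) := fun i => by
    rw [add_sub_cancel, Real.rpow_mul (hd i).le]
  have hs : ∀ i, -1 ≤ d i ^ (2 : ℝ) - 1 := fun i => by
    linarith [Real.rpow_pos_of_pos (hd i) 2]
  have hg : ∀ i, 0 ≤ g i := fun i => by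
    have := _root_.rpow_one_add_le_one_add_mul_self (hs i) ht.1.le ht.2.le
    rw [hpow] at this
    exact sub_nonneg.2 this
  have hsum : ∑ i, p i * g i = 0 := by
    have e : ∀ i, p i * g i = (1 - t) * (p i * d i ^ (0 : ℝ)) + t * (p i * d i ^ (2 : ℝ))
        - p i * d i ^ (2 * t) := fun i => by
      simp only [g, Real.rpow_zero]; ring
    simp only [e, Finset.sum_sub_distrib, Finset.sum_add_distrib, ← Finset.mul_sum, h0, h2, h]
    ring
  have hi := (Finset.sum_eq_zero_iff_of_nonneg
    fun i _ => mul_nonneg (hp i).le (hg i)).1 hsum i (Finset.mem_univ i)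
  have hgi : g i = 0 := (mul_eq_zero.1 hi).resolve_left (hp i).ne'
  by_contra hne
  have hne' : d i ^ (2 : ℝ) - 1 ≠ 0 := fun h => hne <| by
    rw [Real.rpow_two] at h
    nlinarith [hd i]
  have := _root_.rpow_one_add_lt_one_add_mul_self (hs i) hne' ht.1 ht.2
  rw [hpow] at this
  exact (sub_pos.2 this).ne' hgi

/-- `F_{t₀}^spec(ρ,σ) = 1` for some `t₀ ∈ (0,1)` iff `ρ = σ`. -/
theorem specFid_eq_one_iff {n : Type*} [Fintype n] [DecidableEq n]
    (ρ σ : Matrix n n ℂ) (hρ : ρ.PosDef) (hσ : σ.PosDef)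
    (hρ1 : ρ.trace = 1) (hσ1 : σ.trace = 1) :
    (∀ t₀ ∈ Set.Ioo (0 : ℝ) 1, specFid t₀ ρ σ = 1 → ρ = σ) ∧
      (ρ = σ → ∀ t ∈ Set.Icc (0 : ℝ) 1, specFid t ρ σ = 1) := by
  have hdet : IsUnit ρ.det := (Matrix.isUnit_iff_isUnit_det ρ).1 hρ.isUnit
  have hinv : ρ⁻¹⁻¹ = ρ := Matrix.nonsing_inv_nonsing_inv ρ hdet
  constructor
  · intro t ht h
    have hG := posDef_msharp hρ.inv hσ
    have hric := msharp_riccati hρ.inv hσ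
    rw [specFid] at h
    rw [hinv] at hric
    generalize msharp ρ⁻¹ σ = G at *
    obtain ⟨p, hp, htr⟩ := trace_mul_mpow hρ hG.1
    have h0 : Matrix.trace (ρ * mpow G 0) = 1 := by rw [mpow_zero hG, mul_one, hρ1]
    have h2 : Matrix.trace (ρ * mpow G 2) = 1 := by
      rw [← one_add_one_eq_two, ← mpow_add hG, mpow_one hG, ← mul_assoc, Matrix.trace_mul_comm,
        ← mul_assoc, hric, hσ1]
    rw [htr] at h h0 h2
    have hd := eq_one_of_sum_rpow hp hG.eigenvalues_pos ht
      (by exact_mod_cast h0) (by exact_mod_cast h2) (by exact_mod_cast h)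
    -- With all eigenvalues equal to `1`, every power of `G` is the same matrix.
    have hG1 : G = 1 := by
      rw [← mpow_zero hG]
      conv_lhs => rw [← mpow_one hG]
      simp only [mpow, dif_pos hG.1, hd, Real.one_rpow]
    rw [← hric, hG1, one_mul, mul_one]
  · rintro rfl t -
    have h := msharp_inv_self hρ.inv
    rw [hinv] at h
    rw [specFid, h, one_mpow, mul_one, hρ1]
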